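/- Let k ≥ 3 be an integer and let x = (x_1, …, x_k) lie in the standard simplex Δ_k. If x_1 ≤ 6/11 and x_2 ≤ 6/11, then d_k(x) ≤ 2.014096. If x_1 ≥ 6/11 or x_2 ≥ 6/11, then d_k(x) ≤ 11/12. -/

import Mathlib

/-- The cumulative distribution function `F(z) = min((11/6)z, 1)` of the ICUT scheme. -/
noncomputable def Fcdf (z : ℝ) : ℝ := min ((11 / 6) * z) 1

/-- The probability density `F′(z)`: `11/6` for `z < 6/11` and `0` for `z ≥ 6/11`. -/
noncomputable def Fpdf (z : ℝ) : ℝ := if z < 6 / 11 then 11 / 6 else 0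

/-- The density `d_k(x)` with which ICUT cuts an infinitesimal `1,2`-aligned segment at
`x = (x_1, …, x_k)`:
`d_k(x) = (1/k!) ∑_σ [ F′(x_1) ∏_{i : σ(i) < σ(1)} (1 − F(x_i))
                      + F′(x_2) ∏_{i : σ(i) < σ(2)} (1 − F(x_i)) ]`. -/
noncomputable def dDensity (k : ℕ) (hk : 2 ≤ k) (x : Fin k → ℝ) : ℝ :=
  ((Nat.factorial k : ℝ))⁻¹ *
    ∑ σ : Equiv.Perm (Fin k),
      (Fpdf (x ⟨0, by omega⟩) *
          ∏ i ∈ Finset.univ.filter (fun i => σ i < σ ⟨0, by omega⟩), (1 - Fcdf (x i)) +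
        Fpdf (x ⟨1, by omega⟩) *
          ∏ i ∈ Finset.univ.filter (fun i => σ i < σ ⟨1, by omega⟩), (1 - Fcdf (x i)))

/-- `C_k(x_1, x_2) = d_k(x_1, x_2, c, …, c)` where `c = (1 − x_1 − x_2)/(k − 2)`. -/
noncomputable def Cdensity (k : ℕ) (hk : 3 ≤ k) (x1 x2 : ℝ) : ℝ :=
  dDensity k (by omega)
    (fun i => if (i : ℕ) = 0 then x1 else if (i : ℕ) = 1 then x2
      else (1 - x1 - x2) / ((k : ℝ) - 2))

open Finset in
lemma max_count {k : ℕ} (T : Finset (Fin k)) (j : Fin k) (hj : j ∈ T) :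
    (#{σ : Equiv.Perm (Fin k) | ∀ i ∈ T, σ i ≤ σ j}) * #T = k.factorial := by
  have h1 : ∀ j' ∈ T, #{σ : Equiv.Perm (Fin k) | ∀ i ∈ T, σ i ≤ σ j'} =
      #{σ : Equiv.Perm (Fin k) | ∀ i ∈ T, σ i ≤ σ j} := by
    intro j' hj'
    apply Finset.card_equiv (Equiv.mulRight (Equiv.swap j j'))
    intro σ
    have hsw : ∀ i ∈ T, Equiv.swap j j' i ∈ T := by
      intro i hi
      rw [Equiv.swap_apply_def]; split_ifs <;> assumption
    simp only [mem_filter, mem_univ, true_and, Equiv.coe_mulRight, Equiv.Perm.mul_apply,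
      Equiv.swap_apply_left]
    constructor
    · intro h i hi
      exact h _ (hsw i hi)
    · intro h i hi
      have := h _ (hsw i hi)
      rwa [Equiv.swap_apply_self] at this
  have h2 : ∑ j' ∈ T, #{σ : Equiv.Perm (Fin k) | ∀ i ∈ T, σ i ≤ σ j'} = k.factorial := by
    simp_rw [Finset.card_filter]
    rw [Finset.sum_comm]
    have : ∀ σ : Equiv.Perm (Fin k), ∑ j' ∈ T, (if ∀ i ∈ T, σ i ≤ σ j' then 1 else 0) = 1 := by
      intro σ
      obtain ⟨m, hm, hmax⟩ := Finset.exists_max_image T σ ⟨j, hj⟩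
      rw [Finset.sum_eq_single m]
      · rw [if_pos hmax]
      · intro b hb hbm
        rw [if_neg]
        intro h
        exact hbm (σ.injective (le_antisymm (hmax b hb) (h m hm)))
      · exact fun h => absurd hm h
    simp [this, Fintype.card_perm]
  rw [Finset.sum_congr rfl h1, Finset.sum_const, smul_eq_mul, mul_comm] at h2
  exact h2

open Finset in
lemma before_count {k : ℕ} (S : Finset (Fin k)) (j : Fin k) (hj : j ∉ S) :
    ((k.factorial : ℝ))⁻¹ * (#{σ : Equiv.Perm (Fin k) | ∀ i ∈ S, σ i < σ j} : ℝ) = 1 / (#S + 1) := by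
  have h := max_count (insert j S) j (mem_insert_self j S)
  have e : ({σ : Equiv.Perm (Fin k) | ∀ i ∈ insert j S, σ i ≤ σ j} : Finset _) =
      ({σ : Equiv.Perm (Fin k) | ∀ i ∈ S, σ i < σ j} : Finset _) := by
    ext σ
    simp only [mem_filter, mem_univ, true_and, mem_insert, forall_eq_or_imp, le_refl]
    refine forall₂_congr fun i hi => ?_
    have : i ≠ j := fun h => hj (h ▸ hi)
    exact ⟨fun h => lt_of_le_of_ne h (fun h' => this (σ.injective h')), le_of_lt⟩
  rw [e, card_insert_of_notMem hj] at h
  have h' : (#{σ : Equiv.Perm (Fin k) | ∀ i ∈ S, σ i < σ j} : ℝ) * (#S + 1) = k.factorial := by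
    exact_mod_cast h
  have : (k.factorial : ℝ) ≠ 0 := by positivity
  have : (#S + 1 : ℝ) ≠ 0 := by positivity
  field_simp
  linarith

open Finset in
lemma perm_avg {k : ℕ} (F : Fin k → ℝ) (j : Fin k) :
    ((k.factorial : ℝ))⁻¹ * ∑ σ : Equiv.Perm (Fin k), ∏ i ∈ univ.filter (fun i => σ i < σ j), (1 - F i)
    = ∫ t in (0:ℝ)..1, ∏ i ∈ univ.erase j, (1 - t * F i) := by
  have hR : ∀ t : ℝ, ∏ i ∈ univ.erase j, (1 - t * F i) =
      ∑ S ∈ (univ.erase j).powerset, t ^ #S * ∏ i ∈ S, (- F i) := by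
    intro t
    simp_rw [sub_eq_add_neg]
    rw [Finset.prod_one_add]
    refine sum_congr rfl fun S _ => ?_
    rw [← Finset.prod_const, ← Finset.prod_mul_distrib]
    exact prod_congr rfl fun i _ => by ring
  have hL : ∀ σ : Equiv.Perm (Fin k), ∏ i ∈ univ.filter (fun i => σ i < σ j), (1 - F i) =
      ∑ S ∈ (univ.erase j).powerset, (if ∀ i ∈ S, σ i < σ j then 1 else 0) * ∏ i ∈ S, (- F i) := by
    intro σ
    simp_rw [sub_eq_add_neg]
    rw [Finset.prod_one_add]
    simp_rw [ite_mul, one_mul, zero_mul]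
    rw [← Finset.sum_filter]
    refine sum_congr ?_ fun _ _ => rfl
    ext S
    simp only [mem_powerset, mem_filter, subset_iff, mem_univ, true_and, mem_erase, and_true]
    constructor
    · intro h
      exact ⟨fun i hi he => lt_irrefl _ (he ▸ h hi), fun i hi => h hi⟩
    · exact fun h i hi => h.2 hi
  simp_rw [hR, hL]
  rw [intervalIntegral.integral_finsetSum, Finset.sum_comm, Finset.mul_sum]
  · refine sum_congr rfl fun S hS => ?_
    rw [intervalIntegral.integral_mul_const, integral_pow, ← Finset.sum_mul, ← mul_assoc,
      Finset.sum_boole, before_count S j]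
    · simp
    · intro h
      simpa using mem_powerset.1 hS h
  · intro S _
    apply Continuous.intervalIntegrable
    fun_prop

lemma exp_taylor (x : ℝ) (hx : 0 ≤ x) :
    Real.exp (-x) ≤ 1 - x + x^2/2 - x^3/6 + x^4/24 - x^5/120 + x^6/720 := by
  let T : ℝ → ℝ := fun x => (1 - x + x^2/2 - x^3/6 + x^4/24 - x^5/120 + x^6/720) * Real.exp x
  have hd : ∀ y, HasDerivAt T (y^6/720 * Real.exp y) y := by
    intro y
    have h1 : HasDerivAt (fun x : ℝ => 1 - x + x^2/2 - x^3/6 + x^4/24 - x^5/120 + x^6/720)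
      (-1 + y - y^2/2 + y^3/6 - y^4/24 + y^5/120) y := by
      have := ((((((hasDerivAt_const y (1:ℝ)).sub (hasDerivAt_id y)).add
        ((hasDerivAt_pow 2 y).div_const 2)).sub ((hasDerivAt_pow 3 y).div_const 6)).add
        ((hasDerivAt_pow 4 y).div_const 24)).sub ((hasDerivAt_pow 5 y).div_const 120)).add
        ((hasDerivAt_pow 6 y).div_const 720)
      refine HasDerivAt.congr_deriv this ?_
      norm_num
      ring
    refine HasDerivAt.congr_deriv (h1.mul (Real.hasDerivAt_exp y)) ?_
    ring
  have hm : Monotone T := monotone_of_hasDerivAt_nonneg hd (fun y => by positivity)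
  have := hm hx
  simp only [T] at this
  norm_num at this
  rw [Real.exp_neg, inv_le_iff_one_le_mul₀ (Real.exp_pos x)]
  linarith

lemma poly_bound (s : ℝ) (h0 : 0 ≤ s) (h1 : s ≤ 11/6) :
    13/12 + s/9 - 11/48*s^2 + 37/360*s^3 - 127/4320*s^4 + 2/315*s^5 - 269/241920*s^6 + s^7/5760
      ≤ 6/11*2.014096 := by
  have hq : (0.05:ℝ) ≤ 0.1755 - 0.08699*s + 0.0259*s^2 - 0.00574*s^3 + 0.001*s^4 - 0.0001737*s^5 := by
    have a : 0 ≤ s^2 * (11/6 - s) := by have : 0 ≤ 11/6 - s := by linarith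
                                        positivity
    have b : 0 ≤ s^4 * (11/6 - s) := by have : 0 ≤ 11/6 - s := by linarith
                                        positivity
    have c := sq_nonneg (s-11/6)
    have d : 0 ≤ s^4 := by positivity
    nlinarith
  have hq' := mul_le_mul_of_nonneg_left hq (sq_nonneg (s-0.295))
  have p := pow_nonneg h0
  have e2 := mul_nonneg (p 2) (sq_nonneg (s-0.295))
  have e4 := mul_nonneg (p 4) (sq_nonneg (s-0.295))
  have e0 := mul_nonneg (p 0) (sq_nonneg (s-0.295))
  have e1 := mul_nonneg (p 1) (sq_nonneg (s-0.295))
  have e3 := mul_nonneg (p 3) (sq_nonneg (s-0.295))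
  have e5 := mul_nonneg (p 5) (sq_nonneg (s-0.295))
  nlinarith [sq_nonneg (s-0.295+0.0005)]

lemma int_bound (s : ℝ) (h0 : 0 ≤ s) (h1 : s ≤ 11/6) :
    ∫ t in (0:ℝ)..1, (2 - t*(11/6 - s)) * Real.exp (-(t*s)) ≤ 6/11*2.014096 := by
  refine le_trans ?_ (poly_bound s h0 h1)
  have : ∫ t in (0:ℝ)..1, (2 - t*(11/6 - s)) * (1 - t*s + (t*s)^2/2 - (t*s)^3/6 + (t*s)^4/24 - (t*s)^5/120 + (t*s)^6/720) = 13/12 + s/9 - 11/48*s^2 + 37/360*s^3 - 127/4320*s^4 + 2/315*s^5 - 269/241920*s^6 + s^7/5760 := by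
    set u := 11/6 - s with hu
    have hd : ∀ t ∈ Set.uIcc (0:ℝ) 1, HasDerivAt (fun t : ℝ => 2*t - (2*s+u)*(t^2/2) + (s^2+u*s)*(t^3/3)
      - (s^3/3+u*s^2/2)*(t^4/4) + (s^4/12+u*s^3/6)*(t^5/5) - (s^5/60+u*s^4/24)*(t^6/6)
      + (s^6/360+u*s^5/120)*(t^7/7) - u*s^6/720*(t^8/8))
      ((2 - t*u) * (1 - t*s + (t*s)^2/2 - (t*s)^3/6 + (t*s)^4/24 - (t*s)^5/120 + (t*s)^6/720)) t := by
      intro t _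
      have H := fun (c:ℝ) (n:ℕ) => ((hasDerivAt_pow (n+1) t).div_const ((n+1:ℕ):ℝ)).const_mul c
      have := (((((((((hasDerivAt_id t).const_mul 2).sub (H (2*s+u) 1)).add (H (s^2+u*s) 2)).sub
        (H (s^3/3+u*s^2/2) 3)).add (H (s^4/12+u*s^3/6) 4)).sub (H (s^5/60+u*s^4/24) 5)).add
        (H (s^6/360+u*s^5/120) 6)).sub (H (u*s^6/720) 7))
      refine HasDerivAt.congr_deriv this ?_
      norm_num
      ring
    rw [intervalIntegral.integral_eq_sub_of_hasDerivAt hd (by apply Continuous.intervalIntegrable; fun_prop)]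
    rw [hu]; ring
  rw [← this]
  apply intervalIntegral.integral_mono_on (by norm_num)
  · apply Continuous.intervalIntegrable; fun_prop
  · apply Continuous.intervalIntegrable; fun_prop
  · intro t ht
    apply mul_le_mul_of_nonneg_left
    · exact exp_taylor _ (mul_nonneg ht.1 h0)
    · nlinarith [ht.1, ht.2]

open Finset in
lemma half_bound {k : ℕ} (F : Fin k → ℝ) (hF0 : ∀ i, 0 ≤ F i) (hF1 : ∀ i, F i ≤ 1)
    (j m : Fin k) (hmj : m ≠ j) (hm : F m = 1) :
    ∫ t in (0:ℝ)..1, ∏ i ∈ univ.erase j, (1 - t * F i) ≤ 1/2 := by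
  have h : ∫ t in (0:ℝ)..1, (1 - t) = 1/2 := by
    rw [intervalIntegral.integral_sub (by simp) (by simp)]
    simp
    norm_num
  rw [← h]
  apply intervalIntegral.integral_mono_on (by norm_num)
  · apply Continuous.intervalIntegrable; fun_prop
  · apply Continuous.intervalIntegrable; fun_prop
  · intro t ht
    have hmem : m ∈ univ.erase j := by simp [hmj]
    rw [← Finset.mul_prod_erase _ _ hmem, hm, mul_one]
    have h1 : ∏ i ∈ (univ.erase j).erase m, (1 - t * F i) ≤ 1 := by
      apply Finset.prod_le_one
      · intro i _
        nlinarith [ht.1, ht.2, hF0 i, hF1 i]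
      · intro i _
        nlinarith [ht.1, ht.2, hF0 i, hF1 i]
    nlinarith [ht.1, ht.2]

open Finset in
lemma dDensity_eq (k : ℕ) (hk : 2 ≤ k) (x : Fin k → ℝ) :
    dDensity k hk x =
      Fpdf (x ⟨0, by omega⟩) * (∫ t in (0:ℝ)..1, ∏ i ∈ univ.erase (⟨0, by omega⟩ : Fin k), (1 - t * Fcdf (x i)))
      + Fpdf (x ⟨1, by omega⟩) * (∫ t in (0:ℝ)..1, ∏ i ∈ univ.erase (⟨1, by omega⟩ : Fin k), (1 - t * Fcdf (x i))) := by
  rw [← perm_avg, ← perm_avg]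
  unfold dDensity
  rw [Finset.sum_add_distrib, ← Finset.mul_sum, ← Finset.mul_sum]
  ring

open Finset in
lemma main_bound {k : ℕ} (F : Fin k → ℝ) (hF0 : ∀ i, 0 ≤ F i) (hF1 : ∀ i, F i ≤ 1)
    (hs : ∑ i, F i = 11/6) (a b : Fin k) (hab : a ≠ b) :
    (∫ t in (0:ℝ)..1, ∏ i ∈ univ.erase a, (1 - t * F i))
     + (∫ t in (0:ℝ)..1, ∏ i ∈ univ.erase b, (1 - t * F i)) ≤ 6/11*2.014096 := by
  have hba : b ∈ univ.erase a := by simp [hab.symm]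
  have hab' : a ∈ univ.erase b := by simp [hab]
  have e1 : F a + (F b + ∑ i ∈ (univ.erase a).erase b, F i) = 11/6 := by
    rw [Finset.add_sum_erase _ _ hba, Finset.add_sum_erase _ _ (mem_univ a), hs]
  set s := ∑ i ∈ (univ.erase a).erase b, F i with hsd
  have h0 : 0 ≤ s := Finset.sum_nonneg fun i _ => hF0 i
  have ha := hF0 a
  have hb := hF0 b
  refine le_trans ?_ (int_bound s h0 (by linarith))
  rw [← intervalIntegral.integral_add
    (by apply Continuous.intervalIntegrable; fun_prop)
    (by apply Continuous.intervalIntegrable; fun_prop)]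
  apply intervalIntegral.integral_mono_on (by norm_num)
  · apply Continuous.intervalIntegrable; fun_prop
  · apply Continuous.intervalIntegrable; fun_prop
  · intro t ht
    have hR : ∏ i ∈ (univ.erase a).erase b, (1 - t * F i) ≤ Real.exp (-(t*s)) := by
      rw [hsd, Finset.mul_sum, ← Finset.sum_neg_distrib, Real.exp_sum]
      apply Finset.prod_le_prod
      · intro i _
        nlinarith [ht.1, ht.2, hF0 i, hF1 i]
      · intro i _
        linarith [Real.add_one_le_exp (-(t * F i))]
    rw [← Finset.mul_prod_erase _ _ hba, ← Finset.mul_prod_erase _ _ hab',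
      Finset.erase_right_comm (a := b) (b := a), ← add_mul]
    have e2 : 1 - t * F b + (1 - t * F a) = 2 - t * (11/6 - s) := by
      rw [← e1]; ring
    rw [e2]
    apply mul_le_mul_of_nonneg_left hR
    nlinarith [ht.1, ht.2, hF1 a, hF1 b]


/-- if `x ∈ Δ_k` with `x_1, x_2 ≤ 6/11` then `d_k(x) ≤ 2.014096`;
if `x_1 ≥ 6/11` or `x_2 ≥ 6/11` then `d_k(x) ≤ 11/12`. -/
theorem dDensity_bounds (k : ℕ) (hk : 3 ≤ k) (x : Fin k → ℝ)
    (hx : x ∈ stdSimplex ℝ (Fin k)) :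
    ((x ⟨0, by omega⟩ ≤ 6 / 11 ∧ x ⟨1, by omega⟩ ≤ 6 / 11) →
        dDensity k (by omega) x ≤ 2.014096) ∧
    ((6 / 11 ≤ x ⟨0, by omega⟩ ∨ 6 / 11 ≤ x ⟨1, by omega⟩) →
        dDensity k (by omega) x ≤ 11 / 12) := by
  obtain ⟨hx0, hx1⟩ := hx
  have hF0 : ∀ i, 0 ≤ Fcdf (x i) := fun i => by
    have := hx0 i
    unfold Fcdf
    positivity
  have hF1 : ∀ i, Fcdf (x i) ≤ 1 := fun i => min_le_right _ _
  have hbig : ∀ i, 6/11 ≤ x i → Fcdf (x i) = 1 := fun i h => by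
    unfold Fcdf
    exact min_eq_right (by linarith)
  have hsmall : ∀ i, x i ≤ 6/11 → Fcdf (x i) = 11/6 * x i := fun i h => by
    unfold Fcdf
    exact min_eq_left (by linarith)
  have h01 : (⟨0, by omega⟩ : Fin k) ≠ ⟨1, by omega⟩ := by simp
  have hp : ∀ z, 0 ≤ Fpdf z ∧ Fpdf z ≤ 11/6 := by
    intro z
    unfold Fpdf
    split_ifs <;> norm_num
  have hp0 : ∀ z, 6/11 ≤ z → Fpdf z = 0 := by
    intro z hz
    unfold Fpdf
    exact if_neg (by linarith)
  rw [dDensity_eq]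
  have part2 : (6 / 11 ≤ x ⟨0, by omega⟩ ∨ 6 / 11 ≤ x ⟨1, by omega⟩) →
      Fpdf (x ⟨0, by omega⟩) * (∫ t in (0:ℝ)..1, ∏ i ∈ Finset.univ.erase (⟨0, by omega⟩ : Fin k), (1 - t * Fcdf (x i)))
      + Fpdf (x ⟨1, by omega⟩) * (∫ t in (0:ℝ)..1, ∏ i ∈ Finset.univ.erase (⟨1, by omega⟩ : Fin k), (1 - t * Fcdf (x i))) ≤ 11/12 := by
    rintro (h | h)
    · have := half_bound (fun i => Fcdf (x i)) hF0 hF1 ⟨1, by omega⟩ ⟨0, by omega⟩ h01 (hbig _ h)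
      rw [hp0 _ h, zero_mul, zero_add]
      nlinarith [hp (x ⟨1, by omega⟩)]
    · have := half_bound (fun i => Fcdf (x i)) hF0 hF1 ⟨0, by omega⟩ ⟨1, by omega⟩ h01.symm (hbig _ h)
      rw [hp0 _ h, zero_mul, add_zero]
      nlinarith [hp (x ⟨0, by omega⟩)]
  refine ⟨?_, part2⟩
  rintro ⟨ha, hb⟩
  by_cases hc : 6 / 11 ≤ x ⟨0, by omega⟩ ∨ 6 / 11 ≤ x ⟨1, by omega⟩
  · refine (part2 hc).trans (by norm_num)
  push Not at hc
  have q0 : Fpdf (x ⟨0, by omega⟩) = 11/6 := if_pos hc.1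
  have q1 : Fpdf (x ⟨1, by omega⟩) = 11/6 := if_pos hc.2
  rw [q0, q1]
  by_cases hm : ∃ m, 6/11 ≤ x m
  · obtain ⟨m, hm⟩ := hm
    have m0 : m ≠ ⟨0, by omega⟩ := by rintro rfl; linarith
    have m1 : m ≠ ⟨1, by omega⟩ := by rintro rfl; linarith
    have i0 := half_bound (fun i => Fcdf (x i)) hF0 hF1 _ m m0 (hbig _ hm)
    have i1 := half_bound (fun i => Fcdf (x i)) hF0 hF1 _ m m1 (hbig _ hm)
    norm_num at i0 i1 ⊢
    linarith
  · push Not at hm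
    have hs : ∑ i, Fcdf (x i) = 11/6 := by
      rw [Finset.sum_congr rfl fun i _ => hsmall i (hm i).le, ← Finset.mul_sum, hx1, mul_one]
    have := main_bound (fun i => Fcdf (x i)) hF0 hF1 hs _ _ h01
    linarith
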